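/- Let n be a positive integer and let β₁, β₂ be real parameters with β₁ ≥ 0 and β₂ ≥ 0. For G drawn from the real anti-spherical ensemble of size 2n with parameters (β₁, β₂), and for every complex number z, ⟨det(z·I − G)·Tr(G)⟩ = −z^{2n−1}·(β₁+n)/(β₂ + 2n + β₁ + 1/2). Consequently the odd-degree skew orthogonal polynomial Q_{2n+1}(z) := z·⟨det(z·I − G)⟩ + ⟨det(z·I − G)·Tr(G)⟩ equals z^{2n+1} − z^{2n−1}·(β₁+n)/(β₂ + 2n + β₁ + 1/2). -/

import Mathlib

open MeasureTheory Matrix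

/-- The (unnormalized) density of the real anti-spherical ensemble of size `N` with
parameters `(β₁, β₂)`: `det(Gᵀ G)^{β₁} det(I - Gᵀ G)^{β₂}` on the set where
`I - Gᵀ G` is positive definite, and `0` elsewhere. -/
noncomputable def antiSphericalRealWeight (N : ℕ) (β₁ β₂ : ℝ) (g : Fin N → Fin N → ℝ) : ℝ :=
  Set.indicator {g' : Fin N → Fin N → ℝ | (1 - (Matrix.of g')ᵀ * Matrix.of g').PosDef}
    (fun g' => ((Matrix.of g')ᵀ * Matrix.of g').det ^ β₁ *
      (1 - (Matrix.of g')ᵀ * Matrix.of g').det ^ β₂) g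

open Filter Topology

/-- The open unit ball of real matrices for the operator norm, as a set of functions. -/
def matrixBall (N : ℕ) : Set (Fin N → Fin N → ℝ) :=
  {g | (1 - (Matrix.of g)ᵀ * Matrix.of g).PosDef}

/-- Jacobi's formula for the derivative of a determinant along a curve of matrices. -/
lemma hasDerivAt_det {m : Type*} [Fintype m] [DecidableEq m] {M : ℝ → Matrix m m ℝ}
    {M' : Matrix m m ℝ} {t : ℝ} (h : ∀ i j, HasDerivAt (fun s => M s i j) (M' i j) t) :
    HasDerivAt (fun s => (M s).det) ((M t).adjugate * M').trace t := by
  let f : ContinuousMultilinearMap ℝ (fun _ : m => m → ℝ) ℝ :=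
    ⟨(Matrix.detRowAlternating (R := ℝ) (n := m)).toMultilinearMap,
      Continuous.matrix_det (A := fun x : m → m → ℝ => Matrix.of x) continuous_id⟩
  have hM : HasDerivAt (fun s => (fun i j => M s i j : m → m → ℝ)) (fun i j => M' i j) t :=
    hasDerivAt_pi.2 fun i => hasDerivAt_pi.2 fun j => h i j
  have key := (f.hasFDerivAt (fun i j => M t i j)).comp_hasDerivAt t hM
  refine key.congr_deriv ?_
  rw [ContinuousMultilinearMap.linearDeriv_apply, Matrix.trace_mul_comm]
  refine Finset.sum_congr rfl fun i _ => ?_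
  change ((M t).updateRow i (fun j => M' i j)).det = _
  rw [← Matrix.cramer_transpose_apply, Matrix.cramer_eq_adjugate_mulVec,
    ← Matrix.adjugate_transpose, Matrix.mulVec, Matrix.diag_apply, Matrix.mul_apply]
  simp [dotProduct, mul_comm]

lemma isHermitian_one_sub_transpose_mul {m : Type*} [Fintype m] [DecidableEq m]
    (G : Matrix m m ℝ) : (1 - Gᵀ * G).IsHermitian := by
  simp [Matrix.IsHermitian]

lemma isOpen_matrixBall (N : ℕ) : IsOpen (matrixBall N) := by
  let S := Metric.sphere (0 : Fin N → ℝ) 1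
  have hc : IsClosed {p : S × (Fin N → Fin N → ℝ) |
      (p.1 : Fin N → ℝ) ⬝ᵥ ((1 - (Matrix.of p.2)ᵀ * Matrix.of p.2) *ᵥ (p.1 : Fin N → ℝ)) ≤ 0} := by
    refine isClosed_le ?_ continuous_const
    have h2 : Continuous fun p : S × (Fin N → Fin N → ℝ) => Matrix.of p.2 := continuous_snd
    have h1 : Continuous fun p : S × (Fin N → Fin N → ℝ) => (p.1 : Fin N → ℝ) := by fun_prop
    exact h1.dotProduct
      ((continuous_const.sub (h2.matrix_transpose.matrix_mul h2)).matrix_mulVec h1)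
  have himg := isClosedMap_snd_of_compactSpace _ hc
  rw [← isClosed_compl_iff]
  convert himg using 1
  ext g
  simp only [matrixBall, Set.mem_compl_iff, Set.mem_ofPred_eq, Matrix.posDef_iff_dotProduct_mulVec,
    isHermitian_one_sub_transpose_mul, true_and, Set.mem_image, Prod.exists, exists_eq_right,
    star_trivial]
  constructor
  · intro h
    push Not at h
    obtain ⟨x, hx, hq⟩ := h
    have hn : ‖x‖ ≠ 0 := norm_ne_zero_iff.2 hx
    refine ⟨⟨‖x‖⁻¹ • x, by simp [S, norm_smul, hn]⟩, ?_⟩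
    simp only [Matrix.mulVec_smul, smul_dotProduct, dotProduct_smul, smul_eq_mul]
    exact mul_nonpos_of_nonneg_of_nonpos (by positivity)
      (mul_nonpos_of_nonneg_of_nonpos (by positivity) hq)
  · rintro ⟨x, hx⟩ h
    have hx0 : (x : Fin N → ℝ) ≠ 0 := by
      intro h0
      have := x.2
      simp [S, h0] at this
    exact absurd (h hx0) (not_lt.2 hx)

lemma measurableSet_matrixBall (N : ℕ) : MeasurableSet (matrixBall N) :=
  (isOpen_matrixBall N).measurableSet

lemma isClosed_posSemidef_one_sub (N : ℕ) :
    IsClosed {g : Fin N → Fin N → ℝ | (1 - (Matrix.of g)ᵀ * Matrix.of g).PosSemidef} := by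
  have : {g : Fin N → Fin N → ℝ | (1 - (Matrix.of g)ᵀ * Matrix.of g).PosSemidef} =
      ⋂ x : Fin N → ℝ, {g | 0 ≤ x ⬝ᵥ ((1 - (Matrix.of g)ᵀ * Matrix.of g) *ᵥ x)} := by
    ext g
    simp only [Set.mem_ofPred_eq, Set.mem_iInter, Matrix.posSemidef_iff_dotProduct_mulVec,
      isHermitian_one_sub_transpose_mul, true_and, star_trivial]
  rw [this]
  refine isClosed_iInter fun x => isClosed_le continuous_const ?_
  have h2 : Continuous fun g : Fin N → Fin N → ℝ => Matrix.of g := continuous_id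
  exact continuous_const.dotProduct
    ((continuous_const.sub (h2.matrix_transpose.matrix_mul h2)).matrix_mulVec continuous_const)

lemma det_one_sub_pos {N : ℕ} {g : Fin N → Fin N → ℝ} (hg : g ∈ matrixBall N) :
    0 < (1 - (Matrix.of g)ᵀ * Matrix.of g).det :=
  Matrix.PosDef.det_pos hg

lemma matrixBall_subset_Icc (N : ℕ) : matrixBall N ⊆ Set.Icc (fun _ _ => -1) (fun _ _ => 1) := by
  intro g hg
  have key : ∀ i j, |g i j| ≤ 1 := by
    intro i j
    have h := Matrix.PosDef.diag_pos hg (i := j)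
    simp only [Matrix.sub_apply, Matrix.one_apply_eq, Matrix.mul_apply, Matrix.transpose_apply,
      Matrix.of_apply, sub_pos] at h
    have h2 := Finset.single_le_sum (f := fun k => g k j * g k j)
      (fun k _ => mul_self_nonneg _) (Finset.mem_univ i)
    rw [← sq_le_one_iff_abs_le_one]
    nlinarith
  exact ⟨fun i j => (abs_le.1 (key i j)).1, fun i j => (abs_le.1 (key i j)).2⟩

/-- Continuous functions are integrable on the operator-norm ball. -/
lemma Continuous.integrableOn_matrixBall {N : ℕ} {E : Type*} [NormedAddCommGroup E]
    {f : (Fin N → Fin N → ℝ) → E} (hf : Continuous f) :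
    IntegrableOn f (matrixBall N) :=
  (hf.continuousOn.integrableOn_compact isCompact_Icc).mono_set (matrixBall_subset_Icc N)

/-- The directional derivative, along `v`, of a function of the form `H (det G) * F (det (1 - GᵀG))`
extended by zero outside of the operator-norm ball, provided that `F` vanishes to second order
at zero. -/
lemma hasLineDerivAt_indicator_matrixBall {N : ℕ} {H H' F F' : ℝ → ℝ} {C : ℝ}
    (hH : ∀ x, HasDerivAt H (H' x) x) (hF : ∀ x, 0 < x → HasDerivAt F (F' x) x)
    (hFC : ∀ x, 0 < x → x < 1 → |F x| ≤ C * x ^ 2) (g v : Fin N → Fin N → ℝ) :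
    HasLineDerivAt ℝ
      ((matrixBall N).indicator fun g => H (Matrix.of g).det *
        F (1 - (Matrix.of g)ᵀ * Matrix.of g).det)
      ((matrixBall N).indicator (fun g =>
        H' (Matrix.of g).det * ((Matrix.of g).adjugate * Matrix.of v).trace *
            F (1 - (Matrix.of g)ᵀ * Matrix.of g).det +
          H (Matrix.of g).det * (F' (1 - (Matrix.of g)ᵀ * Matrix.of g).det *
            ((1 - (Matrix.of g)ᵀ * Matrix.of g).adjugate *
              (-((Matrix.of v)ᵀ * Matrix.of g + (Matrix.of g)ᵀ * Matrix.of v))).trace)) g) g v := by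
  set d : ℝ → ℝ := fun t => (Matrix.of (g + t • v)).det with hd
  set D : ℝ → ℝ := fun t => (1 - (Matrix.of (g + t • v))ᵀ * Matrix.of (g + t • v)).det with hD
  have hline : Continuous fun t : ℝ => g + t • v := by fun_prop
  have hentry : ∀ i j, HasDerivAt (fun t : ℝ => g i j + t * v i j) (v i j) 0 := by
    intro i j
    simpa using ((hasDerivAt_id (0 : ℝ)).mul_const (v i j)).const_add (g i j)
  have hd' : HasDerivAt d (((Matrix.of g).adjugate * Matrix.of v).trace) 0 := by
    have := hasDerivAt_det (M := fun t => Matrix.of (g + t • v)) (M' := Matrix.of v) (t := 0)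
      (fun i j => by simpa using hentry i j)
    simpa using this
  have hD' : HasDerivAt D (((1 - (Matrix.of g)ᵀ * Matrix.of g).adjugate *
      (-((Matrix.of v)ᵀ * Matrix.of g + (Matrix.of g)ᵀ * Matrix.of v))).trace) 0 := by
    have := hasDerivAt_det (M := fun t => 1 - (Matrix.of (g + t • v))ᵀ * Matrix.of (g + t • v))
      (M' := -((Matrix.of v)ᵀ * Matrix.of g + (Matrix.of g)ᵀ * Matrix.of v)) (t := 0)
      (fun i j => by
        simp only [Matrix.sub_apply, Matrix.mul_apply, Matrix.transpose_apply, Matrix.of_apply,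
          Matrix.neg_apply, Matrix.add_apply, Pi.add_apply, Pi.smul_apply, smul_eq_mul]
        rw [← Finset.sum_add_distrib]
        refine HasDerivAt.const_sub _ (HasDerivAt.fun_sum fun k _ => ?_)
        simpa using (hentry k i).fun_mul (hentry k j))
    simpa using this
  unfold HasLineDerivAt
  by_cases hg : g ∈ matrixBall N
  · have hev : ∀ᶠ t in 𝓝 (0 : ℝ), g + t • v ∈ matrixBall N :=
      hline.continuousAt.eventually_mem ((isOpen_matrixBall N).mem_nhds (by simpa using hg))
    rw [Set.indicator_of_mem hg]
    have h1 : HasDerivAt (fun t => H (d t)) (H' (Matrix.of g).det *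
        ((Matrix.of g).adjugate * Matrix.of v).trace) 0 :=
      HasDerivAt.comp (h₂ := H) 0 (by simpa [hd] using hH _) hd'
    have h2 : HasDerivAt (fun t => F (D t)) (F' (1 - (Matrix.of g)ᵀ * Matrix.of g).det *
        ((1 - (Matrix.of g)ᵀ * Matrix.of g).adjugate *
          (-((Matrix.of v)ᵀ * Matrix.of g + (Matrix.of g)ᵀ * Matrix.of v))).trace) 0 :=
      HasDerivAt.comp (h₂ := F) 0 (by simpa [hD] using hF _ (det_one_sub_pos hg)) hD'
    refine ((h1.mul h2).congr_of_eventuallyEq ?_).congr_deriv (by simp [hd, hD])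
    filter_upwards [hev] with t ht
    simp [Set.indicator_of_mem ht, hd, hD]
  · rw [Set.indicator_of_notMem hg]
    by_cases h0 : (1 - (Matrix.of g)ᵀ * Matrix.of g).det = 0
    · have hD0 : D 0 = 0 := by simpa [hD] using h0
      have hk : HasDerivAt (fun t => H (d t) * D t ^ 2) 0 0 := by
        have h1 := (hH (d 0)).comp 0 hd'
        refine (h1.mul (hD'.pow 2)).congr_deriv ?_
        simp [hD0]
      have hlt : ∀ᶠ t in 𝓝 (0 : ℝ), D t < 1 :=
        hD'.continuousAt.eventually_lt continuousAt_const (by simp [hD0])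
      rw [hasDerivAt_iff_isLittleO] at hk ⊢
      simp only [hD0, ne_eq, OfNat.ofNat_ne_zero, not_false_eq_true, zero_pow, mul_zero, sub_zero,
        smul_zero, zero_smul, add_zero, Set.indicator_of_notMem hg] at hk ⊢
      refine Asymptotics.IsBigO.trans_isLittleO (Asymptotics.IsBigO.of_bound C ?_) hk
      filter_upwards [hlt] with t ht
      by_cases hm : g + t • v ∈ matrixBall N
      · rw [Set.indicator_of_mem hm, norm_mul, norm_mul]
        have := hFC (D t) (det_one_sub_pos hm) ht
        calc ‖H (d t)‖ * ‖F (D t)‖ ≤ ‖H (d t)‖ * (C * D t ^ 2) := by gcongr; exact this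
          _ = C * (‖H (d t)‖ * ‖D t ^ 2‖) := by rw [norm_pow, Real.norm_eq_abs (D t), sq_abs]; ring
      · rw [Set.indicator_of_notMem hm]
        have hC : 0 ≤ C := by
          have := (abs_nonneg _).trans (hFC (1 / 2) (by norm_num) (by norm_num))
          linarith
        simpa using by positivity
    · have hsemi : ¬ (1 - (Matrix.of g)ᵀ * Matrix.of g).PosSemidef :=
        fun h => hg (h.posDef_iff_det_ne_zero.2 h0)
      have hev : ∀ᶠ t in 𝓝 (0 : ℝ), g + t • v ∈
          {g : Fin N → Fin N → ℝ | (1 - (Matrix.of g)ᵀ * Matrix.of g).PosSemidef}ᶜ :=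
        hline.continuousAt.eventually_mem
          ((isClosed_posSemidef_one_sub N).isOpen_compl.mem_nhds (by simpa using hsemi))
      refine (hasDerivAt_const (0 : ℝ) (0 : ℝ)).congr_of_eventuallyEq ?_
      filter_upwards [hev] with t ht
      exact Set.indicator_of_notMem (s := matrixBall N) (fun h => ht (Matrix.PosDef.posSemidef h)) _

lemma sum_mul_apply_single {m : Type*} [Fintype m] [DecidableEq m] (L : Matrix m m ℝ →ₗ[ℝ] ℝ)
    (V : Matrix m m ℝ) : ∑ i, ∑ j, V i j * L (Matrix.single i j 1) = L V := by
  conv_rhs => rw [Matrix.matrix_eq_sum_single V]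
  simp only [map_sum]
  refine Finset.sum_congr rfl fun i _ => Finset.sum_congr rfl fun j _ => ?_
  rw [← smul_eq_mul, ← map_smul, Matrix.smul_single, smul_eq_mul, mul_one]

/-- The directional derivative of the vector field `G ↦ G (1 - GᵀG)`. -/
lemma hasLineDerivAt_mul_one_sub {N : ℕ} (g v : Fin N → Fin N → ℝ) (i j : Fin N) :
    HasLineDerivAt ℝ
      (fun g : Fin N → Fin N → ℝ => (Matrix.of g * (1 - (Matrix.of g)ᵀ * Matrix.of g)) i j)
      ((Matrix.of v * (1 - (Matrix.of g)ᵀ * Matrix.of g) -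
        Matrix.of g * ((Matrix.of v)ᵀ * Matrix.of g + (Matrix.of g)ᵀ * Matrix.of v)) i j) g v := by
  have hentry : ∀ i j, HasDerivAt (fun t : ℝ => g i j + t * v i j) (v i j) 0 := by
    intro i j
    simpa using ((hasDerivAt_id (0 : ℝ)).mul_const (v i j)).const_add (g i j)
  have hW : ∀ k, HasDerivAt
      (fun t : ℝ => (1 - (Matrix.of (g + t • v))ᵀ * Matrix.of (g + t • v)) k j)
      (-((Matrix.of v)ᵀ * Matrix.of g + (Matrix.of g)ᵀ * Matrix.of v) k j) 0 := by
    intro k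
    simp only [Matrix.sub_apply, Matrix.mul_apply, Matrix.transpose_apply, Matrix.of_apply,
      Matrix.add_apply, Pi.add_apply, Pi.smul_apply, smul_eq_mul]
    rw [← Finset.sum_add_distrib]
    refine HasDerivAt.const_sub _ (HasDerivAt.fun_sum fun l _ => ?_)
    simpa using (hentry l k).fun_mul (hentry l j)
  have := HasDerivAt.fun_sum (u := Finset.univ) fun k _ => (hentry i k).fun_mul (hW k)
  simp only [zero_mul, add_zero, zero_smul, mul_neg] at this
  unfold HasLineDerivAt
  refine this.congr_deriv ?_
  simp only [← sub_eq_add_neg, Finset.sum_sub_distrib]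
  rfl

lemma sum_deriv_mul_one_sub {N : ℕ} (G : Matrix (Fin N) (Fin N) ℝ) :
    ∑ i, ∑ j, (Matrix.single i j (1 : ℝ) * (1 - Gᵀ * G) - G * ((Matrix.single i j (1 : ℝ))ᵀ * G +
      Gᵀ * Matrix.single i j (1 : ℝ)) : Matrix (Fin N) (Fin N) ℝ) i j =
      (N : ℝ) ^ 2 - (2 * N + 1) * (Gᵀ * G).trace := by
  have h : ∀ i j, (Matrix.single i j (1 : ℝ) * (1 - Gᵀ * G) - G * ((Matrix.single i j (1 : ℝ))ᵀ * G +
      Gᵀ * Matrix.single i j (1 : ℝ)) : Matrix (Fin N) (Fin N) ℝ) i j =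
      1 - (Gᵀ * G) j j - G i j * G i j - (G * Gᵀ) i i := by
    intro i j
    rw [Matrix.mul_add, ← Matrix.mul_assoc, ← Matrix.mul_assoc, Matrix.transpose_single]
    simp only [Matrix.sub_apply, Matrix.add_apply, Matrix.single_mul_apply_same,
      Matrix.mul_single_apply_same, Matrix.one_apply_eq, one_mul, mul_one]
    rw [Matrix.mul_apply (M := G * _)]
    rw [Finset.sum_eq_single i]
    · simp only [Matrix.mul_single_apply_same]; ring
    · intro b _ hb
      simp [Matrix.mul_single_apply_of_ne, hb]
    · simp
  have h1 : ∑ j, (Gᵀ * G) j j = (Gᵀ * G).trace := rfl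
  have h2 : ∑ i, (G * Gᵀ) i i = (Gᵀ * G).trace := by rw [Matrix.trace_mul_comm]; rfl
  have h3 : ∑ i, ∑ j, G i j * G i j = (Gᵀ * G).trace := by
    rw [← h2]
    simp [Matrix.mul_apply]
  simp only [h, Finset.sum_sub_distrib, h1, h3, Finset.sum_const, Finset.card_univ,
    Fintype.card_fin, nsmul_eq_mul, mul_one, h2, ← Finset.mul_sum]
  ring

/-- The divergence theorem on the operator-norm ball for the vector field
`H (det G) F (det (1 - GᵀG)) G (1 - GᵀG)`. -/
lemma integral_divergence_matrixBall {N : ℕ} {H H' F F' : ℝ → ℝ} {C : ℝ}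
    (hH : ∀ x, HasDerivAt H (H' x) x) (hF : ∀ x, 0 < x → HasDerivAt F (F' x) x)
    (hFC : ∀ x, 0 < x → x < 1 → |F x| ≤ C * x ^ 2)
    (hH'c : Continuous H') (hFc : Continuous F) (hF'c : Continuous F') :
    ∫ g in matrixBall N,
      (H (Matrix.of g).det * F (1 - (Matrix.of g)ᵀ * Matrix.of g).det *
          ((N : ℝ) ^ 2 - (2 * N + 1) * ((Matrix.of g)ᵀ * Matrix.of g).trace) +
        H' (Matrix.of g).det * (Matrix.of g).det * F (1 - (Matrix.of g)ᵀ * Matrix.of g).det *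
          (N - ((Matrix.of g)ᵀ * Matrix.of g).trace) -
        2 * H (Matrix.of g).det * (F' (1 - (Matrix.of g)ᵀ * Matrix.of g).det *
          (1 - (Matrix.of g)ᵀ * Matrix.of g).det) * ((Matrix.of g)ᵀ * Matrix.of g).trace) = 0 := by
  have hHc : Continuous H := continuous_iff_continuousAt.2 fun x => (hH x).continuousAt
  have hof : Continuous fun g : Fin N → Fin N → ℝ => Matrix.of g := continuous_id
  have hWc : Continuous fun g : Fin N → Fin N → ℝ => 1 - (Matrix.of g)ᵀ * Matrix.of g :=
    continuous_const.sub (hof.matrix_transpose.matrix_mul hof)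
  let Ψ : (Fin N → Fin N → ℝ) → ℝ := fun g => H (Matrix.of g).det *
    F (1 - (Matrix.of g)ᵀ * Matrix.of g).det
  have hΨ : Continuous Ψ := (hHc.comp hof.matrix_det).mul (hFc.comp hWc.matrix_det)
  let Ψ' : Matrix (Fin N) (Fin N) ℝ → (Fin N → Fin N → ℝ) → ℝ := fun v g =>
    H' (Matrix.of g).det * ((Matrix.of g).adjugate * v).trace *
        F (1 - (Matrix.of g)ᵀ * Matrix.of g).det +
      H (Matrix.of g).det * (F' (1 - (Matrix.of g)ᵀ * Matrix.of g).det *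
        ((1 - (Matrix.of g)ᵀ * Matrix.of g).adjugate *
          (-(vᵀ * Matrix.of g + (Matrix.of g)ᵀ * v))).trace)
  have hΨ' : ∀ v, Continuous (Ψ' v) := fun v =>
    (((hH'c.comp hof.matrix_det).mul
      (hof.matrix_adjugate.matrix_mul continuous_const).matrix_trace).mul
        (hFc.comp hWc.matrix_det)).add ((hHc.comp hof.matrix_det).mul
      ((hF'c.comp hWc.matrix_det).mul (hWc.matrix_adjugate.matrix_mul
        ((continuous_const.matrix_mul hof).add
          (hof.matrix_transpose.matrix_mul continuous_const)).neg).matrix_trace))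
  let V : Fin N → Fin N → (Fin N → Fin N → ℝ) → ℝ := fun i j g =>
    (Matrix.of g * (1 - (Matrix.of g)ᵀ * Matrix.of g)) i j
  have hV : ∀ i j, Continuous (V i j) := fun i j =>
    (hof.matrix_mul hWc).matrix_elem i j
  let V' : Fin N → Fin N → (Fin N → Fin N → ℝ) → ℝ := fun i j g =>
    (Matrix.single i j (1 : ℝ) * (1 - (Matrix.of g)ᵀ * Matrix.of g) - Matrix.of g *
      ((Matrix.single i j (1 : ℝ))ᵀ * Matrix.of g + (Matrix.of g)ᵀ * Matrix.single i j (1 : ℝ))) i j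
  have hV' : ∀ i j, Continuous (V' i j) := fun i j =>
    ((continuous_const.matrix_mul hWc).sub (hof.matrix_mul ((continuous_const.matrix_mul hof).add
          (hof.matrix_transpose.matrix_mul continuous_const)))).matrix_elem i j
  have hint : ∀ f φ : (Fin N → Fin N → ℝ) → ℝ, Continuous f → Continuous φ →
      Integrable fun g => ContinuousLinearMap.mul ℝ ℝ (f g) ((matrixBall N).indicator φ g) := by
    intro f φ hf hφ
    simp only [ContinuousLinearMap.mul_apply', ← Set.indicator_mul_right]
    exact (integrable_indicator_iff (measurableSet_matrixBall N)).2
      (hf.mul hφ).integrableOn_matrixBall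
  have hparts : ∀ i j, ∫ g in matrixBall N,
      (V i j g * Ψ' (Matrix.single i j 1) g + V' i j g * Ψ g) = 0 := by
    intro i j
    have key := integral_bilinear_hasLineDerivAt_right_eq_neg_left_of_integrable
      (μ := (volume : Measure (Fin N → Fin N → ℝ))) (v := Matrix.of.symm (Matrix.single i j (1 : ℝ)))
      (hint _ _ (hV' i j) hΨ) (hint _ _ (hV i j) (hΨ' (Matrix.single i j 1)))
      (hint _ _ (hV i j) hΨ)
      (fun g _ => hasLineDerivAt_mul_one_sub g _ i j)
      (fun g _ => hasLineDerivAt_indicator_matrixBall hH hF hFC g _)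
    simp only [ContinuousLinearMap.mul_apply', ← Set.indicator_mul_right] at key
    rw [integral_indicator (measurableSet_matrixBall N),
      integral_indicator (measurableSet_matrixBall N)] at key
    have hc₁ : Continuous fun g => V i j g * Ψ' (Matrix.single i j 1) g := (hV i j).mul (hΨ' _)
    have hc₂ : Continuous fun g => V' i j g * Ψ g := (hV' i j).mul hΨ
    rw [integral_add hc₁.integrableOn_matrixBall hc₂.integrableOn_matrixBall, key, neg_add_cancel]
  have hsum : ∫ g in matrixBall N,
      ∑ i, ∑ j, (V i j g * Ψ' (Matrix.single i j 1) g + V' i j g * Ψ g) = 0 := by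
    have hc : ∀ i j, Continuous fun g => V i j g * Ψ' (Matrix.single i j 1) g + V' i j g * Ψ g :=
      fun i j => ((hV i j).mul (hΨ' _)).add ((hV' i j).mul hΨ)
    rw [integral_finsetSum _ fun i _ =>
      (continuous_finsetSum _ fun j _ => hc i j).integrableOn_matrixBall]
    refine Finset.sum_eq_zero fun i _ => ?_
    rw [integral_finsetSum _ fun j _ => (hc i j).integrableOn_matrixBall]
    exact Finset.sum_eq_zero fun j _ => hparts i j
  rw [← hsum]
  congr 1
  ext g
  set G := Matrix.of g
  let L : Matrix (Fin N) (Fin N) ℝ →ₗ[ℝ] ℝ :=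
    { toFun := fun v => Ψ' v g
      map_add' := fun v w => by
        simp only [Ψ', Matrix.mul_add, Matrix.transpose_add, Matrix.add_mul, Matrix.trace_add,
          Matrix.mul_neg, Matrix.trace_neg]
        ring
      map_smul' := fun c v => by
        simp only [Ψ', Matrix.mul_add, Matrix.transpose_smul, Matrix.smul_mul, Matrix.mul_smul,
          Matrix.trace_add, Matrix.mul_neg, Matrix.trace_neg, Matrix.trace_smul, smul_eq_mul,
          RingHom.id_apply]
        ring }
  have h1 : ∑ i, ∑ j, V i j g * Ψ' (Matrix.single i j 1) g = Ψ' (G * (1 - Gᵀ * G)) g :=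
    sum_mul_apply_single L (G * (1 - Gᵀ * G))
  have h2 : ∑ i, ∑ j, V' i j g * Ψ g =
      ((N : ℝ) ^ 2 - (2 * N + 1) * (Gᵀ * G).trace) * Ψ g := by
    rw [← sum_deriv_mul_one_sub]
    simp only [Finset.sum_mul]
    rfl
  simp only [Finset.sum_add_distrib]
  rw [h1, h2]
  have h3 : (G.adjugate * (G * (1 - Gᵀ * G))).trace = G.det * (N - (Gᵀ * G).trace) := by
    rw [← Matrix.mul_assoc, Matrix.adjugate_mul, Matrix.smul_mul, Matrix.one_mul,
      Matrix.trace_smul, Matrix.trace_sub, Matrix.trace_one, Fintype.card_fin, smul_eq_mul]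
  have h4 : ((1 - Gᵀ * G).adjugate * (-((G * (1 - Gᵀ * G))ᵀ * G + Gᵀ * (G * (1 - Gᵀ * G))))).trace
      = -2 * (1 - Gᵀ * G).det * (Gᵀ * G).trace := by
    have h5 : (G * (1 - Gᵀ * G))ᵀ * G = (1 - Gᵀ * G) * (Gᵀ * G) := by
      simp [Matrix.transpose_mul, Matrix.mul_assoc]
    rw [h5, Matrix.mul_neg, Matrix.mul_add, Matrix.trace_neg, Matrix.trace_add,
      ← Matrix.mul_assoc, Matrix.adjugate_mul, ← Matrix.mul_assoc Gᵀ, Matrix.trace_mul_comm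
      ((1 - Gᵀ * G).adjugate) ((Gᵀ * G) * (1 - Gᵀ * G)), Matrix.mul_assoc, Matrix.mul_adjugate]
    simp only [Matrix.smul_mul, Matrix.mul_smul, Matrix.one_mul, Matrix.mul_one, Matrix.trace_smul,
      smul_eq_mul]
    ring
  simp only [Ψ', Ψ]
  change _ = H' G.det * (G.adjugate * (G * (1 - Gᵀ * G))).trace * _ + _ * (_ *
    ((1 - Gᵀ * G).adjugate * (-((G * (1 - Gᵀ * G))ᵀ * G + Gᵀ * (G * (1 - Gᵀ * G))))).trace) + _
  rw [h3, h4]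
  ring

section Regularization

variable {β ε : ℝ}

/-- The derivative of the regularization `x ↦ (x ^ 2 + ε) ^ β` of `x ↦ |x| ^ (2 * β)`. -/
lemma hasDerivAt_sq_add_rpow (hε : 0 < ε) (x : ℝ) :
    HasDerivAt (fun x : ℝ => (x ^ 2 + ε) ^ β) (2 * x * β * (x ^ 2 + ε) ^ (β - 1)) x := by
  have h := ((hasDerivAt_pow 2 x).add_const ε).rpow_const (p := β) (Or.inl (by positivity))
  simpa using h

/-- The derivative of the regularization `x ↦ x ^ β * (x / (|x| + ε)) ^ 2` of `x ↦ x ^ β`. -/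
lemma hasDerivAt_rpow_mul_div_sq (hε : 0 < ε) {x : ℝ} (hx : 0 < x) :
    HasDerivAt (fun x : ℝ => x ^ β * (x / (|x| + ε)) ^ 2)
      (x ^ β * (x / (|x| + ε) ^ 2) * (β + 2 * (ε / (|x| + ε)))) x := by
  have hne : x + ε ≠ 0 := by positivity
  have h : HasDerivAt (fun x : ℝ => x ^ β * (x / (x + ε)) ^ 2) _ x :=
    (Real.hasDerivAt_rpow_const (p := β) (Or.inl hx.ne')).fun_mul
      ((((hasDerivAt_id' x).fun_div ((hasDerivAt_id' x).add_const ε) hne)).fun_pow 2)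
  refine (h.congr_of_eventuallyEq ?_).congr_deriv ?_
  · filter_upwards [lt_mem_nhds hx] with y hy
    rw [abs_of_pos hy]
  · rw [abs_of_pos hx, Real.rpow_sub_one hx.ne']
    have h2 : (2 : ℕ) - 1 = 1 := rfl
    simp only [h2]
    push_cast
    field_simp
    ring

lemma abs_rpow_mul_div_sq_le (hβ : 0 ≤ β) (hε : 0 < ε) {x : ℝ} (hx : 0 < x) (hx1 : x < 1) :
    |x ^ β * (x / (|x| + ε)) ^ 2| ≤ (1 / ε ^ 2) * x ^ 2 := by
  rw [abs_of_pos hx, abs_of_nonneg (by positivity)]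
  have h1 : x ^ β ≤ 1 := Real.rpow_le_one hx.le hx1.le hβ
  have h2 : (x / (x + ε)) ^ 2 ≤ (x / ε) ^ 2 := by gcongr; linarith
  calc x ^ β * (x / (x + ε)) ^ 2 ≤ 1 * (x / ε) ^ 2 := by gcongr
    _ = _ := by ring

lemma regularized_integrand_eq {β₁ β₂ d D A B T : ℝ} (hε : 0 < ε) (hD : 0 < D) :
    (d ^ 2 + ε) ^ β₁ * (D ^ β₂ * (D / (|D| + ε)) ^ 2) * A +
        2 * d * β₁ * (d ^ 2 + ε) ^ (β₁ - 1) * d * (D ^ β₂ * (D / (|D| + ε)) ^ 2) * B -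
        2 * (d ^ 2 + ε) ^ β₁ * (D ^ β₂ * (D / (|D| + ε) ^ 2) * (β₂ + 2 * (ε / (|D| + ε))) * D) * T =
      (d ^ 2 + ε) ^ β₁ * (D ^ β₂ * (D / (D + ε)) ^ 2) *
        (A + 2 * β₁ * (d ^ 2 / (d ^ 2 + ε)) * B - 2 * (β₂ + 2 * (ε / (D + ε))) * T) := by
  have : d ^ 2 + ε ≠ 0 := by positivity
  rw [abs_of_pos hD, Real.rpow_sub_one this]
  field_simp

lemma abs_regularized_integrand_le {β₁ β₂ d D A B T : ℝ} (hβ₁ : 0 ≤ β₁) (hβ₂ : 0 ≤ β₂)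
    (hε : 0 < ε) (hε1 : ε ≤ 1) (hD : 0 < D) :
    |(d ^ 2 + ε) ^ β₁ * (D ^ β₂ * (D / (D + ε)) ^ 2) *
        (A + 2 * β₁ * (d ^ 2 / (d ^ 2 + ε)) * B - 2 * (β₂ + 2 * (ε / (D + ε))) * T)| ≤
      (d ^ 2 + 1) ^ β₁ * D ^ β₂ * (|A| + 2 * β₁ * |B| + 2 * (β₂ + 2) * |T|) := by
  have h1 : D / (D + ε) ≤ 1 := div_le_one_of_le₀ (by linarith) (by positivity)
  have h2 : d ^ 2 / (d ^ 2 + ε) ≤ 1 := div_le_one_of_le₀ (by linarith) (by positivity)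
  have h3 : ε / (D + ε) ≤ 1 := div_le_one_of_le₀ (by linarith) (by positivity)
  have h4 : D ^ β₂ * (D / (D + ε)) ^ 2 ≤ D ^ β₂ :=
    mul_le_of_le_one_right (by positivity) (pow_le_one₀ (by positivity) h1)
  have h5 : |A + 2 * β₁ * (d ^ 2 / (d ^ 2 + ε)) * B - 2 * (β₂ + 2 * (ε / (D + ε))) * T| ≤
      |A| + 2 * β₁ * |B| + 2 * (β₂ + 2) * |T| := by
    refine (abs_sub _ _).trans (add_le_add ((abs_add_le _ _).trans (add_le_add le_rfl ?_)) ?_)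
    · rw [abs_mul, abs_of_nonneg (by positivity)]
      exact mul_le_mul_of_nonneg_right (mul_le_of_le_one_right (by positivity) h2) (abs_nonneg B)
    · rw [abs_mul, abs_of_nonneg (by positivity)]
      gcongr
      linarith
  rw [abs_mul, abs_of_nonneg (by positivity)]
  gcongr

lemma tendsto_regularized_integrand {β₁ β₂ d D A B T : ℝ} (hβ₁ : 0 ≤ β₁) (hD : 0 < D) :
    Tendsto (fun ε => (d ^ 2 + ε) ^ β₁ * (D ^ β₂ * (D / (D + ε)) ^ 2) *
        (A + 2 * β₁ * (d ^ 2 / (d ^ 2 + ε)) * B - 2 * (β₂ + 2 * (ε / (D + ε))) * T)) (𝓝 0)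
      (𝓝 ((d ^ 2) ^ β₁ * D ^ β₂ * (A + 2 * β₁ * B - 2 * β₂ * T))) := by
  have hadd : ∀ x : ℝ, Tendsto (fun ε : ℝ => x + ε) (𝓝 0) (𝓝 x) := fun x => by
    simpa using (tendsto_const_nhds (x := x)).add (tendsto_id (x := 𝓝 (0 : ℝ)))
  have h1 : Tendsto (fun ε : ℝ => (d ^ 2 + ε) ^ β₁) (𝓝 0) (𝓝 ((d ^ 2) ^ β₁)) :=
    (hadd _).rpow_const (Or.inr hβ₁)
  have h2 : Tendsto (fun ε : ℝ => D / (D + ε)) (𝓝 0) (𝓝 1) := by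
    rw [← div_self hD.ne']
    exact tendsto_const_nhds.div (hadd D) hD.ne'
  have h3 : Tendsto (fun ε : ℝ => ε / (D + ε)) (𝓝 0) (𝓝 0) := by
    have h := tendsto_id.div (hadd D) hD.ne'
    rwa [zero_div] at h
  have h4 : Tendsto (fun ε : ℝ => D ^ β₂ * (D / (D + ε)) ^ 2) (𝓝 0) (𝓝 (D ^ β₂)) := by
    simpa using (h2.pow 2).const_mul (D ^ β₂)
  have h5 : Tendsto (fun ε : ℝ => 2 * (β₂ + 2 * (ε / (D + ε))) * T) (𝓝 0) (𝓝 (2 * β₂ * T)) := by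
    simpa using (((h3.const_mul 2).const_add β₂).const_mul 2).mul_const T
  by_cases hd : d = 0 ∧ β₁ ≠ 0
  · have h0 : (d ^ 2) ^ β₁ = 0 := by simp [hd.1, Real.zero_rpow hd.2]
    have h6 : ∀ ε : ℝ, 2 * β₁ * (d ^ 2 / (d ^ 2 + ε)) * B = 0 := by simp [hd.1]
    simp only [h6]
    have := (h1.mul h4).mul ((tendsto_const_nhds (x := A + 0)).sub h5)
    simpa [h0] using this
  · refine (h1.mul h4).mul (Tendsto.sub (Tendsto.const_add _ ?_) h5)
    rcases eq_or_ne β₁ 0 with rfl | hβ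
    · simp
    · have hd0 : d ^ 2 ≠ 0 := pow_ne_zero 2 fun h => hd ⟨h, hβ⟩
      have h6 : Tendsto (fun ε : ℝ => d ^ 2 / (d ^ 2 + ε)) (𝓝 0) (𝓝 1) := by
        rw [← div_self hd0]
        exact tendsto_const_nhds.div (hadd _) hd0
      simpa using (h6.const_mul (2 * β₁)).mul_const B

end Regularization

/-- The density of the real anti-spherical ensemble on the operator-norm ball. -/
noncomputable def antiSphericalDensity (N : ℕ) (β₁ β₂ : ℝ) (g : Fin N → Fin N → ℝ) : ℝ :=
  ((Matrix.of g)ᵀ * Matrix.of g).det ^ β₁ * (1 - (Matrix.of g)ᵀ * Matrix.of g).det ^ β₂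

section Density

variable {N : ℕ} {β₁ β₂ : ℝ}

lemma continuous_antiSphericalDensity (hβ₁ : 0 ≤ β₁) (hβ₂ : 0 ≤ β₂) :
    Continuous (antiSphericalDensity N β₁ β₂) := by
  have hof : Continuous fun g : Fin N → Fin N → ℝ => Matrix.of g := continuous_id
  have hW := hof.matrix_transpose.matrix_mul hof
  exact (hW.matrix_det.rpow_const fun _ => Or.inr hβ₁).mul
    ((continuous_const.sub hW).matrix_det.rpow_const fun _ => Or.inr hβ₂)

lemma integral_antiSphericalDensity_eq_zero (hβ₁ : 0 ≤ β₁) (hβ₂ : 0 ≤ β₂) :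
    ∫ g in matrixBall N, antiSphericalDensity N β₁ β₂ g *
      (((N : ℝ) ^ 2 - (2 * N + 1) * ((Matrix.of g)ᵀ * Matrix.of g).trace) +
        2 * β₁ * (N - ((Matrix.of g)ᵀ * Matrix.of g).trace) -
        2 * β₂ * ((Matrix.of g)ᵀ * Matrix.of g).trace) = 0 := by
  let ε : ℕ → ℝ := fun k => 1 / ((k : ℝ) + 1)
  have hε : ∀ k, 0 < ε k := fun k => by positivity
  have hε1 : ∀ k, ε k ≤ 1 := fun k => div_le_one_of_le₀ (by simp) (by positivity)
  have hε0 : Tendsto ε atTop (𝓝 0) := tendsto_one_div_add_atTop_nhds_zero_nat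
  have hof : Continuous fun g : Fin N → Fin N → ℝ => Matrix.of g := continuous_id
  have hW := hof.matrix_transpose.matrix_mul hof
  have hT := hW.matrix_trace
  have hd := hof.matrix_det
  have hD : Continuous fun g : Fin N → Fin N → ℝ => (1 - (Matrix.of g)ᵀ * Matrix.of g).det :=
    (continuous_const.sub hW).matrix_det
  have hmeas : ∀ k, Measurable fun g : Fin N → Fin N → ℝ =>
      ((Matrix.of g).det ^ 2 + ε k) ^ β₁ * ((1 - (Matrix.of g)ᵀ * Matrix.of g).det ^ β₂ *
        ((1 - (Matrix.of g)ᵀ * Matrix.of g).det /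
          ((1 - (Matrix.of g)ᵀ * Matrix.of g).det + ε k)) ^ 2) *
        (((N : ℝ) ^ 2 - (2 * N + 1) * ((Matrix.of g)ᵀ * Matrix.of g).trace) +
          2 * β₁ * ((Matrix.of g).det ^ 2 / ((Matrix.of g).det ^ 2 + ε k)) *
            (N - ((Matrix.of g)ᵀ * Matrix.of g).trace) -
          2 * (β₂ + 2 * (ε k / ((1 - (Matrix.of g)ᵀ * Matrix.of g).det + ε k))) *
            ((Matrix.of g)ᵀ * Matrix.of g).trace) := by
    intro k
    have := hd.measurable
    have := hD.measurable
    have := hT.measurable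
    fun_prop
  have hbound : Continuous fun g : Fin N → Fin N → ℝ =>
      ((Matrix.of g).det ^ 2 + 1) ^ β₁ * (1 - (Matrix.of g)ᵀ * Matrix.of g).det ^ β₂ *
        (|(N : ℝ) ^ 2 - (2 * N + 1) * ((Matrix.of g)ᵀ * Matrix.of g).trace| +
          2 * β₁ * |N - ((Matrix.of g)ᵀ * Matrix.of g).trace| +
          2 * (β₂ + 2) * |((Matrix.of g)ᵀ * Matrix.of g).trace|) := by
    have h1 : Continuous fun g : Fin N → Fin N → ℝ => ((Matrix.of g).det ^ 2 + 1) ^ β₁ :=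
      ((hd.pow 2).add continuous_const).rpow_const fun _ => Or.inr hβ₁
    have h2 : Continuous fun g : Fin N → Fin N → ℝ =>
        (1 - (Matrix.of g)ᵀ * Matrix.of g).det ^ β₂ := hD.rpow_const fun _ => Or.inr hβ₂
    fun_prop
  have hne : ∀ k (x : ℝ), |x| + ε k ≠ 0 := fun k x => by have := hε k; positivity
  have hne2 : ∀ k (x : ℝ), x ^ 2 + ε k ≠ 0 := fun k x => by have := hε k; positivity
  have hH'c : ∀ k, Continuous fun x : ℝ => 2 * x * β₁ * (x ^ 2 + ε k) ^ (β₁ - 1) := fun k =>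
    (by fun_prop : Continuous fun x : ℝ => 2 * x * β₁).mul
      ((by fun_prop : Continuous fun x : ℝ => x ^ 2 + ε k).rpow_const fun x => Or.inl (hne2 k x))
  have hFc : ∀ k, Continuous fun x : ℝ => x ^ β₂ * (x / (|x| + ε k)) ^ 2 := fun k =>
    (Real.continuous_rpow_const hβ₂).mul
      ((continuous_id.div (by fun_prop) (hne k)).pow 2)
  have hF'c : ∀ k, Continuous fun x : ℝ =>
      x ^ β₂ * (x / (|x| + ε k) ^ 2) * (β₂ + 2 * (ε k / (|x| + ε k))) := fun k =>
    ((Real.continuous_rpow_const hβ₂).mul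
      (continuous_id.div (by fun_prop) fun x => pow_ne_zero 2 (hne k x))).mul
      (continuous_const.add (continuous_const.mul
        (continuous_const.div (by fun_prop) (hne k))))
  have hzero := fun k => integral_divergence_matrixBall (N := N)
    (hasDerivAt_sq_add_rpow (β := β₁) (hε k))
    (fun x hx => hasDerivAt_rpow_mul_div_sq (β := β₂) (hε k) hx)
    (fun x hx hx1 => abs_rpow_mul_div_sq_le hβ₂ (hε k) hx hx1) (hH'c k) (hFc k) (hF'c k)
  have hlim := tendsto_integral_of_dominated_convergence
    (μ := (volume : Measure (Fin N → Fin N → ℝ)).restrict (matrixBall N)) _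
    (fun k => (hmeas k).aestronglyMeasurable) hbound.integrableOn_matrixBall
    (fun k => ae_restrict_of_forall_mem (measurableSet_matrixBall N) fun g hg =>
      abs_regularized_integrand_le hβ₁ hβ₂ (hε k) (hε1 k) (det_one_sub_pos hg))
    (ae_restrict_of_forall_mem (measurableSet_matrixBall N) fun g hg =>
      (tendsto_regularized_integrand hβ₁ (det_one_sub_pos hg)).comp hε0)
  have hzero' := fun k => (setIntegral_congr_fun (measurableSet_matrixBall N) fun g hg =>
    regularized_integrand_eq (hε k) (det_one_sub_pos hg)).symm.trans (hzero k)
  refine (setIntegral_congr_fun (measurableSet_matrixBall N) fun g _ => ?_).trans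
    (tendsto_nhds_unique hlim (tendsto_const_nhds.congr fun k => (hzero' k).symm))
  simp only [antiSphericalDensity, Matrix.det_mul, Matrix.det_transpose, pow_two]

/-- The mean of `Tr GᵀG` in the real anti-spherical ensemble. -/
lemma integral_antiSphericalDensity_mul_trace (hβ₁ : 0 ≤ β₁) (hβ₂ : 0 ≤ β₂) :
    (2 * N + 1 + 2 * β₁ + 2 * β₂) * ∫ g in matrixBall N, antiSphericalDensity N β₁ β₂ g *
        ((Matrix.of g)ᵀ * Matrix.of g).trace =
      N * (N + 2 * β₁) * ∫ g in matrixBall N, antiSphericalDensity N β₁ β₂ g := by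
  have hw := continuous_antiSphericalDensity (N := N) hβ₁ hβ₂
  have hof : Continuous fun g : Fin N → Fin N → ℝ => Matrix.of g := continuous_id
  have hT : Continuous fun g : Fin N → Fin N → ℝ => ((Matrix.of g)ᵀ * Matrix.of g).trace :=
    (hof.matrix_transpose.matrix_mul hof).matrix_trace
  have hwT : Continuous fun g => antiSphericalDensity N β₁ β₂ g *
      ((Matrix.of g)ᵀ * Matrix.of g).trace := hw.mul hT
  rw [← sub_eq_zero, ← neg_eq_zero, neg_sub, ← integral_const_mul, ← integral_const_mul,
    ← integral_sub (hw.integrableOn_matrixBall.const_mul _)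
      (hwT.integrableOn_matrixBall.const_mul _),
    ← integral_antiSphericalDensity_eq_zero hβ₁ hβ₂]
  congr 1
  ext g
  ring

end Density

section Symmetry

variable {N : ℕ}

/-- Changing the sign of the row `k` of a matrix. -/
def negRow (k : Fin N) (g : Fin N → Fin N → ℝ) : Fin N → Fin N → ℝ :=
  fun i => if i = k then -g i else g i

lemma measurePreserving_negRow (k : Fin N) : MeasurePreserving (negRow k) := by
  have h : ∀ i, MeasurePreserving (fun x : Fin N → ℝ => if i = k then -x else x) := by
    intro i
    by_cases hi : i = k
    · simpa [hi] using Measure.measurePreserving_neg (volume : Measure (Fin N → ℝ))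
    · simp only [hi, if_false]
      exact MeasurePreserving.id _
  exact volume_preserving_pi h

lemma negRow_negRow (k : Fin N) (g : Fin N → Fin N → ℝ) : negRow k (negRow k g) = g := by
  ext i j
  by_cases hi : i = k <;> simp [negRow, hi]

lemma integral_eq_zero_of_negRow {F : (Fin N → Fin N → ℝ) → ℂ} (k : Fin N)
    (hF : ∀ g, F (negRow k g) = -F g) : ∫ g, F g = 0 := by
  have hm := measurePreserving_negRow k
  have h := hm.integral_comp
    (MeasurableEquiv.ofInvolutive (negRow k) (negRow_negRow k) hm.measurable).measurableEmbedding F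
  simp only [hF, integral_neg] at h
  exact self_eq_neg.1 h.symm

lemma integral_permute_rows (σ : Equiv.Perm (Fin N)) (F : (Fin N → Fin N → ℝ) → ℝ) :
    ∫ g : Fin N → Fin N → ℝ, F (fun i => g (σ i)) = ∫ g, F g := by
  have h := (volume_measurePreserving_piCongrLeft (fun _ : Fin N => Fin N → ℝ)
    σ.symm).integral_comp' F
  rw [← h]
  congr 1
  ext g
  congr 1
  ext i j
  have := MeasurableEquiv.piCongrLeft_apply_apply (β := fun _ : Fin N => Fin N → ℝ) σ.symm g (σ i)
  rw [Equiv.symm_apply_apply] at this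
  rw [this]

variable {β₁ β₂ : ℝ}

lemma antiSphericalRealWeight_eq_indicator :
    antiSphericalRealWeight N β₁ β₂ = (matrixBall N).indicator (antiSphericalDensity N β₁ β₂) :=
  rfl

lemma antiSphericalRealWeight_congr {g g' : Fin N → Fin N → ℝ}
    (h : (Matrix.of g)ᵀ * Matrix.of g = (Matrix.of g')ᵀ * Matrix.of g') :
    antiSphericalRealWeight N β₁ β₂ g = antiSphericalRealWeight N β₁ β₂ g' := by
  have hm : g ∈ matrixBall N ↔ g' ∈ matrixBall N := by
    change (1 - (Matrix.of g)ᵀ * Matrix.of g).PosDef ↔ (1 - (Matrix.of g')ᵀ * Matrix.of g').PosDef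
    rw [h]
  rw [antiSphericalRealWeight_eq_indicator]
  by_cases hg : g ∈ matrixBall N
  · rw [Set.indicator_of_mem hg, Set.indicator_of_mem (hm.1 hg), antiSphericalDensity, h,
      antiSphericalDensity]
  · rw [Set.indicator_of_notMem hg, Set.indicator_of_notMem (fun h => hg (hm.2 h))]

lemma antiSphericalRealWeight_negRow (k : Fin N) (g : Fin N → Fin N → ℝ) :
    antiSphericalRealWeight N β₁ β₂ (negRow k g) = antiSphericalRealWeight N β₁ β₂ g := by
  refine antiSphericalRealWeight_congr ?_
  ext i j
  simp only [Matrix.mul_apply, Matrix.transpose_apply, Matrix.of_apply]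
  refine Finset.sum_congr rfl fun l _ => ?_
  by_cases hl : l = k <;> simp [negRow, hl]

lemma antiSphericalRealWeight_permute_rows (σ : Equiv.Perm (Fin N)) (g : Fin N → Fin N → ℝ) :
    antiSphericalRealWeight N β₁ β₂ (fun i => g (σ i)) = antiSphericalRealWeight N β₁ β₂ g := by
  refine antiSphericalRealWeight_congr ?_
  ext i j
  simp only [Matrix.mul_apply, Matrix.transpose_apply, Matrix.of_apply]
  exact Equiv.sum_comp σ fun l => g l i * g l j

lemma integral_antiSphericalRealWeight_mul (f : (Fin N → Fin N → ℝ) → ℝ) :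
    ∫ g, antiSphericalRealWeight N β₁ β₂ g * f g =
      ∫ g in matrixBall N, antiSphericalDensity N β₁ β₂ g * f g := by
  rw [← integral_indicator (measurableSet_matrixBall N), antiSphericalRealWeight_eq_indicator]
  simp only [Set.indicator_mul_left]

lemma integrable_antiSphericalRealWeight_mul (hβ₁ : 0 ≤ β₁) (hβ₂ : 0 ≤ β₂)
    {f : (Fin N → Fin N → ℝ) → ℂ} (hf : Continuous f) :
    Integrable fun g => (antiSphericalRealWeight N β₁ β₂ g : ℂ) * f g := by
  have hc : Continuous fun g => (antiSphericalDensity N β₁ β₂ g : ℂ) * f g :=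
    (Complex.continuous_ofReal.comp (continuous_antiSphericalDensity hβ₁ hβ₂)).mul hf
  refine ((integrable_indicator_iff (measurableSet_matrixBall N)).2
    hc.integrableOn_matrixBall).congr (ae_of_all _ fun g => ?_)
  simp only [antiSphericalRealWeight_eq_indicator]
  by_cases hg : g ∈ matrixBall N <;> simp [hg]

lemma antiSphericalRealWeight_nonneg (g : Fin N → Fin N → ℝ) :
    0 ≤ antiSphericalRealWeight N β₁ β₂ g := by
  rw [antiSphericalRealWeight_eq_indicator]
  refine Set.indicator_nonneg (fun g hg => ?_) g
  rw [antiSphericalDensity, Matrix.det_mul, Matrix.det_transpose]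
  exact mul_nonneg (Real.rpow_nonneg (mul_self_nonneg _) _)
    (Real.rpow_nonneg (det_one_sub_pos hg).le _)

lemma integral_antiSphericalRealWeight_pos (hβ₁ : 0 ≤ β₁) (hβ₂ : 0 ≤ β₂) :
    0 < ∫ g, antiSphericalRealWeight N β₁ β₂ g := by
  have hint : Integrable (antiSphericalRealWeight N β₁ β₂) :=
    (integrable_indicator_iff (measurableSet_matrixBall N)).2
      (continuous_antiSphericalDensity hβ₁ hβ₂).integrableOn_matrixBall
  rw [integral_pos_iff_support_of_nonneg antiSphericalRealWeight_nonneg hint]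
  have hdet : Continuous fun g : Fin N → Fin N → ℝ => (Matrix.of g).det :=
    Continuous.matrix_det (A := fun g : Fin N → Fin N → ℝ => Matrix.of g) continuous_id
  have hopen : IsOpen (matrixBall N ∩ {g | (Matrix.of g).det ≠ 0}) :=
    (isOpen_matrixBall N).inter (isOpen_ne_fun hdet continuous_const)
  have hne : (matrixBall N ∩ {g | (Matrix.of g).det ≠ 0}).Nonempty := by
    refine ⟨Matrix.of.symm ((1 / 2 : ℝ) • 1), ?_, ?_⟩
    · have : (1 - (((1 / 2 : ℝ) • 1 : Matrix (Fin N) (Fin N) ℝ))ᵀ *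
          ((1 / 2 : ℝ) • 1 : Matrix (Fin N) (Fin N) ℝ)) = (3 / 4 : ℝ) • 1 := by
        simp only [Matrix.transpose_smul, Matrix.transpose_one, Matrix.smul_mul, Matrix.mul_smul,
          Matrix.one_mul, smul_smul]
        rw [← one_smul ℝ (1 : Matrix (Fin N) (Fin N) ℝ), smul_smul, ← sub_smul]
        norm_num
      change (1 - _ : Matrix (Fin N) (Fin N) ℝ).PosDef
      rw [Equiv.apply_symm_apply, this]
      exact Matrix.PosDef.one.smul (by norm_num)
    · simp
  refine (hopen.measure_pos volume hne).trans_le (measure_mono ?_)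
  rintro g ⟨hg, hd⟩
  rw [Function.mem_support, antiSphericalRealWeight_eq_indicator, Set.indicator_of_mem hg,
    antiSphericalDensity, Matrix.det_mul, Matrix.det_transpose]
  exact (mul_pos (Real.rpow_pos_of_pos (mul_self_pos.2 hd) _)
    (Real.rpow_pos_of_pos (det_one_sub_pos hg) _)).ne'

/-- The sum of the second moments of the diagonal entries in the real anti-spherical ensemble. -/
lemma sum_integral_antiSphericalRealWeight_mul_sq (hN : 0 < N) (hβ₁ : 0 ≤ β₁) (hβ₂ : 0 ≤ β₂) :
    (2 * N + 1 + 2 * β₁ + 2 * β₂) *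
        ∑ i, ∫ g : Fin N → Fin N → ℝ, antiSphericalRealWeight N β₁ β₂ g * (g i i * g i i) =
      (N + 2 * β₁) * ∫ g, antiSphericalRealWeight N β₁ β₂ g := by
  have hswap : ∀ i j, ∫ g : Fin N → Fin N → ℝ, antiSphericalRealWeight N β₁ β₂ g * (g i j * g i j) =
      ∫ g : Fin N → Fin N → ℝ, antiSphericalRealWeight N β₁ β₂ g * (g j j * g j j) := by
    intro i j
    rw [← integral_permute_rows (Equiv.swap i j)]
    simp only [antiSphericalRealWeight_permute_rows, Equiv.swap_apply_left]
  have hc : ∀ i j, Continuous fun g : Fin N → Fin N → ℝ =>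
      antiSphericalDensity N β₁ β₂ g * (g i j * g i j) := fun i j =>
    (continuous_antiSphericalDensity hβ₁ hβ₂).mul (by fun_prop)
  have htrace : ∫ g in matrixBall N, antiSphericalDensity N β₁ β₂ g *
      ((Matrix.of g)ᵀ * Matrix.of g).trace =
      N * ∑ i, ∫ g : Fin N → Fin N → ℝ, antiSphericalRealWeight N β₁ β₂ g * (g i i * g i i) := by
    simp only [Matrix.trace, Matrix.diag_apply, Matrix.mul_apply, Matrix.transpose_apply,
      Matrix.of_apply, Finset.mul_sum]
    rw [integral_finsetSum _ fun j _ =>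
      (continuous_finsetSum _ fun i _ => hc i j).integrableOn_matrixBall]
    refine Finset.sum_congr rfl fun j _ => ?_
    rw [integral_finsetSum _ fun i _ => (hc i j).integrableOn_matrixBall]
    simp only [← integral_antiSphericalRealWeight_mul, hswap]
    simp
  have hmass : ∫ g in matrixBall N, antiSphericalDensity N β₁ β₂ g =
      ∫ g, antiSphericalRealWeight N β₁ β₂ g := by
    rw [← integral_indicator (measurableSet_matrixBall N), antiSphericalRealWeight_eq_indicator]
  have h := integral_antiSphericalDensity_mul_trace (N := N) hβ₁ hβ₂
  rw [htrace, hmass] at h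
  have hN' : (N : ℝ) ≠ 0 := by exact_mod_cast hN.ne'
  refine mul_left_cancel₀ hN' ?_
  linarith

end Symmetry

section Characteristic

variable {N : ℕ}

/-- The term of the multilinear expansion of `det (z I - G)` in which the rows in `S` are taken
from `z I` and the remaining ones from `-G`. -/
noncomputable def charTerm (z : ℂ) (S : Finset (Fin N)) (g : Fin N → Fin N → ℝ) : ℂ :=
  (Matrix.of (S.piecewise (fun i => (z • (1 : Matrix (Fin N) (Fin N) ℂ)) i)
    fun i j => -(g i j : ℂ))).det

lemma det_smul_one_sub_eq_sum_charTerm (z : ℂ) (g : Fin N → Fin N → ℝ) :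
    (z • (1 : Matrix (Fin N) (Fin N) ℂ) - (Matrix.of g).map ((↑) : ℝ → ℂ)).det =
      ∑ S, charTerm z S g := by
  have h := (Matrix.detRowAlternating (n := Fin N) (R := ℂ)).toMultilinearMap.map_add_univ
    (fun i => (z • (1 : Matrix (Fin N) (Fin N) ℂ)) i) fun i j => -(g i j : ℂ)
  refine Eq.trans ?_ h
  change _ = Matrix.det _
  congr 1

lemma continuous_charTerm (z : ℂ) (S : Finset (Fin N)) : Continuous (charTerm z S) := by
  refine Continuous.matrix_det (continuous_matrix fun i j => ?_)
  by_cases hi : i ∈ S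
  · simp only [Matrix.of_apply, Finset.piecewise_eq_of_mem _ _ _ hi]
    exact continuous_const
  · simp only [Matrix.of_apply, Finset.piecewise_eq_of_notMem _ _ _ hi]
    fun_prop

lemma charTerm_negRow_of_mem (z : ℂ) {S : Finset (Fin N)} {k : Fin N} (hk : k ∈ S)
    (g : Fin N → Fin N → ℝ) : charTerm z S (negRow k g) = charTerm z S g := by
  unfold charTerm
  congr 1
  ext i j
  by_cases hi : i ∈ S
  · simp [hi]
  · have : i ≠ k := fun h => hi (h ▸ hk)
    simp [hi, negRow, this]

lemma charTerm_negRow_of_notMem (z : ℂ) {S : Finset (Fin N)} {k : Fin N} (hk : k ∉ S)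
    (g : Fin N → Fin N → ℝ) : charTerm z S (negRow k g) = -charTerm z S g := by
  unfold charTerm
  set M := Matrix.of (S.piecewise (fun i => (z • (1 : Matrix (Fin N) (Fin N) ℂ)) i)
    fun i j => -(g i j : ℂ)) with hM
  have h : Matrix.of (S.piecewise (fun i => (z • (1 : Matrix (Fin N) (Fin N) ℂ)) i)
      fun i j => -(negRow k g i j : ℂ)) = M.updateRow k ((-1 : ℂ) • M k) := by
    ext i j
    by_cases hi : i = k
    · subst hi
      simp [hM, hk, negRow, Finset.piecewise]
    · by_cases hS : i ∈ S <;> simp [hM, hi, hS, negRow, Finset.piecewise]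
  rw [h, Matrix.det_updateRow_smul, Matrix.updateRow_eq_self]
  ring

lemma charTerm_univ (z : ℂ) (g : Fin N → Fin N → ℝ) : charTerm z Finset.univ g = z ^ N := by
  have h : charTerm z Finset.univ g = (z • (1 : Matrix (Fin N) (Fin N) ℂ)).det := by
    unfold charTerm
    rw [Finset.piecewise_univ]
    rfl
  simp [h]

lemma charTerm_univ_erase (z : ℂ) (i : Fin N) (g : Fin N → Fin N → ℝ) :
    charTerm z (Finset.univ.erase i) g = -z ^ (N - 1) * g i i := by
  have h : Matrix.of ((Finset.univ.erase i).piecewise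
      (fun i => (z • (1 : Matrix (Fin N) (Fin N) ℂ)) i) fun i j => -(g i j : ℂ)) =
      (z • (1 : Matrix (Fin N) (Fin N) ℂ)).updateRow i fun j => -(g i j : ℂ) := by
    ext k j
    by_cases hk : k = i
    · subst hk
      simp
    · simp [hk]
  rw [charTerm, h, ← Matrix.cramer_transpose_apply, Matrix.cramer_eq_adjugate_mulVec,
    Matrix.transpose_smul, Matrix.transpose_one, Matrix.adjugate_smul, Matrix.adjugate_one]
  simp [Matrix.smul_mulVec]

variable {β₁ β₂ : ℝ}

lemma integral_mul_charTerm_eq_zero (z : ℂ) {S : Finset (Fin N)} (hS : S ≠ Finset.univ) :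
    ∫ g, (antiSphericalRealWeight N β₁ β₂ g : ℂ) * charTerm z S g = 0 := by
  obtain ⟨k, hk⟩ : ∃ k, k ∉ S := by
    by_contra! h
    exact hS (Finset.eq_univ_of_forall h)
  refine integral_eq_zero_of_negRow k fun g => ?_
  rw [antiSphericalRealWeight_negRow, charTerm_negRow_of_notMem z hk, mul_neg]

lemma integral_mul_charTerm_mul_diag_eq_zero (z : ℂ) {S : Finset (Fin N)} {i : Fin N}
    (hS : S ≠ Finset.univ.erase i) :
    ∫ g, (antiSphericalRealWeight N β₁ β₂ g : ℂ) * (charTerm z S g * (g i i : ℂ)) = 0 := by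
  obtain ⟨k, hk⟩ : ∃ k, ¬(k ∈ S ↔ k ≠ i) := by
    by_contra! h
    refine hS (Finset.ext fun k => ?_)
    rw [h k]
    simp
  refine integral_eq_zero_of_negRow k fun g => ?_
  rw [antiSphericalRealWeight_negRow]
  by_cases hki : k = i
  · subst hki
    rw [charTerm_negRow_of_mem z (by simpa using hk)]
    simp [negRow]
  · rw [charTerm_negRow_of_notMem z (by simpa [hki] using hk)]
    simp [negRow, Ne.symm hki]

/-- The average of the characteristic polynomial in the real anti-spherical ensemble. -/
lemma integral_antiSphericalRealWeight_mul_det (hβ₁ : 0 ≤ β₁) (hβ₂ : 0 ≤ β₂) (z : ℂ) :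
    ∫ g : Fin N → Fin N → ℝ, (antiSphericalRealWeight N β₁ β₂ g : ℂ) *
        (z • (1 : Matrix (Fin N) (Fin N) ℂ) - (Matrix.of g).map ((↑) : ℝ → ℂ)).det =
      z ^ N * ((∫ g, antiSphericalRealWeight N β₁ β₂ g : ℝ) : ℂ) := by
  simp only [det_smul_one_sub_eq_sum_charTerm, Finset.mul_sum]
  rw [integral_finsetSum _ fun S _ =>
      integrable_antiSphericalRealWeight_mul hβ₁ hβ₂ (continuous_charTerm z S),
    Finset.sum_eq_single Finset.univ (fun S _ hS => integral_mul_charTerm_eq_zero z hS)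
      (fun h => absurd (Finset.mem_univ _) h)]
  simp only [charTerm_univ]
  rw [integral_mul_const, integral_complex_ofReal, mul_comm]

lemma integral_antiSphericalRealWeight_mul_det_mul_trace (hβ₁ : 0 ≤ β₁) (hβ₂ : 0 ≤ β₂) (z : ℂ) :
    ∫ g : Fin N → Fin N → ℝ, (antiSphericalRealWeight N β₁ β₂ g : ℂ) *
        ((z • (1 : Matrix (Fin N) (Fin N) ℂ) - (Matrix.of g).map ((↑) : ℝ → ℂ)).det *
          ((Matrix.of g).trace : ℂ)) =
      -z ^ (N - 1) * ((∑ i, ∫ g : Fin N → Fin N → ℝ,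
        antiSphericalRealWeight N β₁ β₂ g * (g i i * g i i) : ℝ) : ℂ) := by
  have hint : ∀ i S, Integrable fun g : Fin N → Fin N → ℝ =>
      (antiSphericalRealWeight N β₁ β₂ g : ℂ) * (charTerm z S g * (g i i : ℂ)) := fun i S =>
    integrable_antiSphericalRealWeight_mul hβ₁ hβ₂ ((continuous_charTerm z S).mul (by fun_prop))
  simp only [det_smul_one_sub_eq_sum_charTerm, Matrix.trace, Matrix.diag_apply, Matrix.of_apply,
    Complex.ofReal_sum, Finset.mul_sum, Finset.sum_mul]
  rw [integral_finsetSum _ fun i _ => integrable_finsetSum _ fun S _ => hint i S]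
  refine Finset.sum_congr rfl fun i _ => ?_
  rw [integral_finsetSum _ fun S _ => hint i S, Finset.sum_eq_single (Finset.univ.erase i)
    (fun S _ hS => integral_mul_charTerm_mul_diag_eq_zero z hS)
    (fun h => absurd (Finset.mem_univ _) h), ← integral_complex_ofReal, ← integral_const_mul]
  refine integral_congr_ae (ae_of_all _ fun g => ?_)
  simp only [charTerm_univ_erase]
  push_cast
  ring

end Characteristic

/-- For the real anti-spherical ensemble of size `2n` with parameters `(β₁, β₂)`:
`⟨det (z I - G) Tr G⟩ = -z^(2n-1) (β₁+n)/(β₂ + 2n + β₁ + 1/2)`, and consequently the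
odd-degree skew orthogonal polynomial `Q_{2n+1}(z) = z ⟨det (z I - G)⟩ + ⟨det (z I - G) Tr G⟩`
equals `z^(2n+1) - z^(2n-1) (β₁+n)/(β₂ + 2n + β₁ + 1/2)`. -/
theorem realAntiSpherical_odd_skew_orthogonal_poly (n : ℕ) (hn : 0 < n)
    (β₁ β₂ : ℝ) (hβ₁ : 0 ≤ β₁) (hβ₂ : 0 ≤ β₂) (z : ℂ) :
    (∫ g : Fin (2 * n) → Fin (2 * n) → ℝ,
          (antiSphericalRealWeight (2 * n) β₁ β₂ g : ℂ) *
            ((z • (1 : Matrix (Fin (2 * n)) (Fin (2 * n)) ℂ)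
              - (Matrix.of g).map ((↑) : ℝ → ℂ)).det * ((Matrix.of g).trace : ℂ))) /
        ((∫ g : Fin (2 * n) → Fin (2 * n) → ℝ, antiSphericalRealWeight (2 * n) β₁ β₂ g : ℝ) : ℂ)
      = -z ^ (2 * n - 1) *
          (((β₁ + n) / (β₂ + 2 * n + β₁ + 1 / 2) : ℝ) : ℂ) ∧
    z * ((∫ g : Fin (2 * n) → Fin (2 * n) → ℝ,
          (antiSphericalRealWeight (2 * n) β₁ β₂ g : ℂ) *
            (z • (1 : Matrix (Fin (2 * n)) (Fin (2 * n)) ℂ)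
              - (Matrix.of g).map ((↑) : ℝ → ℂ)).det) /
        ((∫ g : Fin (2 * n) → Fin (2 * n) → ℝ, antiSphericalRealWeight (2 * n) β₁ β₂ g : ℝ) : ℂ))
      + (∫ g : Fin (2 * n) → Fin (2 * n) → ℝ,
          (antiSphericalRealWeight (2 * n) β₁ β₂ g : ℂ) *
            ((z • (1 : Matrix (Fin (2 * n)) (Fin (2 * n)) ℂ)
              - (Matrix.of g).map ((↑) : ℝ → ℂ)).det * ((Matrix.of g).trace : ℂ))) /
        ((∫ g : Fin (2 * n) → Fin (2 * n) → ℝ, antiSphericalRealWeight (2 * n) β₁ β₂ g : ℝ) : ℂ)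
      = z ^ (2 * n + 1) - z ^ (2 * n - 1) *
          (((β₁ + n) / (β₂ + 2 * n + β₁ + 1 / 2) : ℝ) : ℂ) := by
  have hZ := (integral_antiSphericalRealWeight_pos (N := 2 * n) hβ₁ hβ₂).ne'
  have hmoment := sum_integral_antiSphericalRealWeight_mul_sq (N := 2 * n) (by omega) hβ₁ hβ₂
  push_cast at hmoment
  have hpos : 0 < β₂ + 2 * n + β₁ + 1 / 2 := by positivity
  have hratio : (∑ i, ∫ g : Fin (2 * n) → Fin (2 * n) → ℝ,
      antiSphericalRealWeight (2 * n) β₁ β₂ g * (g i i * g i i)) /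
        ∫ g, antiSphericalRealWeight (2 * n) β₁ β₂ g =
      (β₁ + n) / (β₂ + 2 * n + β₁ + 1 / 2) := by
    rw [div_eq_div_iff hZ hpos.ne']
    linarith
  rw [integral_antiSphericalRealWeight_mul_det hβ₁ hβ₂,
    integral_antiSphericalRealWeight_mul_det_mul_trace hβ₁ hβ₂,
    mul_div_cancel_right₀ _ (Complex.ofReal_ne_zero.2 hZ), mul_div_assoc, ← Complex.ofReal_div,
    hratio]
  exact ⟨rfl, by ring⟩
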